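/- arXiv:1106.6214 — 3 statements merged into one kernel-verified Lean document; each statement's English description precedes it below -/
import Mathlib

section
/- Let 0 < d < 2 and set α* = arcsin(d/2), σ* = arcsin(d/4). For each σ ∈ [0, σ*] there exists a unique δ_RL(σ) ∈ [0, α*] with d_RL(d,σ,δ_RL(σ)) = 2; moreover δ_RL(0) = α*, δ_RL(σ*) = 0, and for δ ∈ [0, α*] one has d_RL(d,σ,δ) > 2 if δ < δ_RL(σ) and d_RL(d,σ,δ) < 2 if δ > δ_RL(σ). -/
open Real

/-- Distance between the center of the right starting disk and the left final disk,
in `(σ, δ)` coordinates. -/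
noncomputable def dRL (d σ δ : ℝ) : ℝ :=
  Real.sqrt (d ^ 2 - 4 * d * Real.cos δ * Real.sin σ + 4 * Real.cos δ ^ 2)

/-!
The condition `dRL d σ δ = 2` is a quadratic equation `x ^ 2 - (d sin σ) x = 1 - (d / 2) ^ 2` in
`x = cos δ`. For `|d| ≤ 2` its right-hand side is nonnegative, hence so is minus the product of its
roots: the left-hand side crosses the right-hand side at most once on `x > 0`, from below to above.
(It need not be monotone there, so neither is `dRL` in `δ`.) Existence of the crossing follows from
the intermediate value theorem, because `dRL` is decreasing in `sin σ` and equals `2` at the two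
corners `(0, arcsin (d / 2))` and `(arcsin (d / 4), 0)`.
-/

section Quadratic

variable {R : Type*} [CommRing R] [LinearOrder R] [IsStrictOrderedRing R] {b k x y : R}

theorem add_sub_pos_of_sq_sub_mul_eq (hk : 0 ≤ k) (hx : 0 < x) (hy : 0 < y)
    (hroot : y ^ 2 - b * y = k) : 0 < x + y - b := by
  have hprod : 0 ≤ y * (y - b) := by linear_combination hk - hroot
  have hsub : 0 ≤ y - b := nonneg_of_mul_nonneg_right hprod hy
  linear_combination hx + hsub

theorem lt_sq_sub_mul_iff_of_root (hk : 0 ≤ k) (hx : 0 < x) (hy : 0 < y)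
    (hroot : y ^ 2 - b * y = k) : k < x ^ 2 - b * x ↔ y < x := by
  have hfactor : x ^ 2 - b * x - k = (x - y) * (x + y - b) := by linear_combination hroot
  rw [← sub_pos, hfactor, mul_pos_iff_of_pos_right (add_sub_pos_of_sq_sub_mul_eq hk hx hy hroot),
    sub_pos]

theorem sq_sub_mul_lt_iff_of_root (hk : 0 ≤ k) (hx : 0 < x) (hy : 0 < y)
    (hroot : y ^ 2 - b * y = k) : x ^ 2 - b * x < k ↔ x < y := by
  have hfactor : k - (x ^ 2 - b * x) = (y - x) * (x + y - b) := by linear_combination -hroot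
  rw [← sub_pos, hfactor, mul_pos_iff_of_pos_right (add_sub_pos_of_sq_sub_mul_eq hk hx hy hroot),
    sub_pos]

end Quadratic

section Trigonometry

variable {θ x : ℝ}

theorem cos_pos_of_mem_Ico (hθ : θ ∈ Set.Ico 0 (π / 2)) : 0 < cos θ :=
  cos_pos_of_mem_Ioo ⟨by linarith [pi_pos, hθ.1], hθ.2⟩

theorem strictAntiOn_cos_Ico : StrictAntiOn cos (Set.Ico 0 (π / 2)) :=
  strictAntiOn_cos.mono fun _ hθ ↦ ⟨hθ.1, by linarith [pi_pos, hθ.2]⟩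

theorem Icc_zero_arcsin_subset_Ico (hx : x < 1) : Set.Icc 0 (arcsin x) ⊆ Set.Ico 0 (π / 2) :=
  Set.Icc_subset_Ico_right (arcsin_lt_pi_div_two.mpr hx)

theorem sin_mem_Icc_of_mem_Icc_arcsin (hθ : θ ∈ Set.Icc 0 (arcsin x)) :
    sin θ ∈ Set.Icc 0 x := by
  have hθ_le : θ ≤ π / 2 := hθ.2.trans (arcsin_le_pi_div_two x)
  exact ⟨sin_nonneg_of_nonneg_of_le_pi hθ.1 (by linarith [pi_pos]),
    (le_arcsin_iff_sin_le' ⟨by linarith [pi_pos, hθ.1], hθ_le⟩).mp hθ.2⟩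

end Trigonometry

section Distance

variable {d σ τ δ δ₀ : ℝ}

theorem two_lt_dRL_iff :
    2 < dRL d σ δ ↔ 1 - (d / 2) ^ 2 < cos δ ^ 2 - d * sin σ * cos δ := by
  rw [dRL, Real.lt_sqrt zero_le_two]
  constructor <;> intro h <;> linarith

theorem dRL_lt_two_iff :
    dRL d σ δ < 2 ↔ cos δ ^ 2 - d * sin σ * cos δ < 1 - (d / 2) ^ 2 := by
  rw [dRL, Real.sqrt_lt' zero_lt_two]
  constructor <;> intro h <;> linarith

theorem dRL_eq_two_iff :
    dRL d σ δ = 2 ↔ cos δ ^ 2 - d * sin σ * cos δ = 1 - (d / 2) ^ 2 := by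
  simp only [eq_iff_le_not_lt, ← not_lt, two_lt_dRL_iff, dRL_lt_two_iff]

theorem continuous_dRL : Continuous (dRL d σ) := by
  unfold dRL
  fun_prop

theorem dRL_le_dRL_of_sin_le_sin (hd : 0 ≤ d) (hδ : 0 ≤ cos δ) (h : sin σ ≤ sin τ) :
    dRL d τ δ ≤ dRL d σ δ := by
  unfold dRL
  gcongr

theorem dRL_zero_arcsin (hd : |d| ≤ 2) : dRL d 0 (arcsin (d / 2)) = 2 := by
  obtain ⟨hd₁, hd₂⟩ := abs_le.mp hd
  rw [dRL_eq_two_iff, cos_sq', sin_arcsin (by linarith) (by linarith), sin_zero]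
  ring

theorem dRL_arcsin_zero (hd : |d| ≤ 4) : dRL d (arcsin (d / 4)) 0 = 2 := by
  obtain ⟨hd₁, hd₂⟩ := abs_le.mp hd
  rw [dRL_eq_two_iff, cos_zero, sin_arcsin (by linarith) (by linarith)]
  ring

theorem exists_mem_Icc_dRL_eq_two (hd : d ≤ 2) (hσ₀ : 0 ≤ sin σ) (hσ : sin σ ≤ d / 4) :
    ∃ δ ∈ Set.Icc 0 (arcsin (d / 2)), dRL d σ δ = 2 := by
  have hd₀ : 0 ≤ d := by linarith
  have hright : dRL d σ (arcsin (d / 2)) ≤ 2 :=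
    calc dRL d σ (arcsin (d / 2))
      _ ≤ dRL d 0 (arcsin (d / 2)) :=
        dRL_le_dRL_of_sin_le_sin hd₀ (cos_arcsin_nonneg _) (by rwa [sin_zero])
      _ = 2 := dRL_zero_arcsin (by rwa [abs_of_nonneg hd₀])
  have hleft : 2 ≤ dRL d σ 0 :=
    calc 2
      _ = dRL d (arcsin (d / 4)) 0 := (dRL_arcsin_zero (by rw [abs_of_nonneg hd₀]; linarith)).symm
      _ ≤ dRL d σ 0 := dRL_le_dRL_of_sin_le_sin hd₀ (cos_zero ▸ zero_le_one)
        (by rwa [sin_arcsin (by linarith) (by linarith)])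
  exact intermediate_value_Icc' (arcsin_nonneg.mpr (by positivity))
    continuous_dRL.continuousOn ⟨hright, hleft⟩

theorem one_sub_half_sq_nonneg (hd : |d| ≤ 2) : 0 ≤ 1 - (d / 2) ^ 2 := by
  rw [sub_nonneg, sq_le_one_iff_abs_le_one, abs_div, abs_two]
  linarith

theorem two_lt_dRL_iff_lt (hd : |d| ≤ 2) (hδ₀ : δ₀ ∈ Set.Ico 0 (π / 2)) (h₀ : dRL d σ δ₀ = 2)
    (hδ : δ ∈ Set.Ico 0 (π / 2)) : 2 < dRL d σ δ ↔ δ < δ₀ := by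
  rw [two_lt_dRL_iff, lt_sq_sub_mul_iff_of_root (one_sub_half_sq_nonneg hd) (cos_pos_of_mem_Ico hδ)
    (cos_pos_of_mem_Ico hδ₀) (dRL_eq_two_iff.mp h₀), strictAntiOn_cos_Ico.lt_iff_gt hδ₀ hδ]

theorem dRL_lt_two_iff_lt (hd : |d| ≤ 2) (hδ₀ : δ₀ ∈ Set.Ico 0 (π / 2)) (h₀ : dRL d σ δ₀ = 2)
    (hδ : δ ∈ Set.Ico 0 (π / 2)) : dRL d σ δ < 2 ↔ δ₀ < δ := by
  rw [dRL_lt_two_iff, sq_sub_mul_lt_iff_of_root (one_sub_half_sq_nonneg hd) (cos_pos_of_mem_Ico hδ)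
    (cos_pos_of_mem_Ico hδ₀) (dRL_eq_two_iff.mp h₀), strictAntiOn_cos_Ico.lt_iff_gt hδ hδ₀]

theorem eq_of_dRL_eq_two (hd : |d| ≤ 2) (hδ₀ : δ₀ ∈ Set.Ico 0 (π / 2)) (h₀ : dRL d σ δ₀ = 2)
    (hδ : δ ∈ Set.Ico 0 (π / 2)) (h : dRL d σ δ = 2) : δ = δ₀ :=
  le_antisymm (not_lt.mp fun hlt ↦ ((dRL_lt_two_iff_lt hd hδ₀ h₀ hδ).mpr hlt).ne h)
    (not_lt.mp fun hlt ↦ ((two_lt_dRL_iff_lt hd hδ₀ h₀ hδ).mpr hlt).ne' h)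

end Distance

/-- Let `0 < d < 2`, `α* = arcsin (d/2)`, `σ* = arcsin (d/4)`.
For each `σ ∈ [0, σ*]` there is a unique `δ₀ ∈ [0, α*]` with `d_RL(d, σ, δ₀) = 2`;
moreover `δ₀ = α*` when `σ = 0`, `δ₀ = 0` when `σ = σ*`, and for `δ ∈ [0, α*]`
one has `d_RL > 2` for `δ < δ₀` and `d_RL < 2` for `δ > δ₀`. -/
theorem dRL_boundary_curve (d : ℝ) (hd0 : 0 < d) (hd2 : d < 2) :
    ∀ σ ∈ Set.Icc (0:ℝ) (Real.arcsin (d / 4)),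
      ∃ δ₀ ∈ Set.Icc (0:ℝ) (Real.arcsin (d / 2)),
        dRL d σ δ₀ = 2 ∧
        (∀ δ ∈ Set.Icc (0:ℝ) (Real.arcsin (d / 2)), dRL d σ δ = 2 → δ = δ₀) ∧
        (σ = 0 → δ₀ = Real.arcsin (d / 2)) ∧
        (σ = Real.arcsin (d / 4) → δ₀ = 0) ∧
        (∀ δ ∈ Set.Icc (0:ℝ) (Real.arcsin (d / 2)),
          (δ < δ₀ → 2 < dRL d σ δ) ∧ (δ₀ < δ → dRL d σ δ < 2)) := by
  intro σ hσ
  have hd : |d| ≤ 2 := by rw [abs_of_pos hd0]; exact hd2.le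
  have hα : 0 ≤ arcsin (d / 2) := arcsin_nonneg.mpr (by positivity)
  have hsub : Set.Icc 0 (arcsin (d / 2)) ⊆ Set.Ico 0 (π / 2) :=
    Icc_zero_arcsin_subset_Ico (by linarith)
  obtain ⟨hsin₀, hsin⟩ := sin_mem_Icc_of_mem_Icc_arcsin hσ
  obtain ⟨δ₀, hδ₀, h₀⟩ := exists_mem_Icc_dRL_eq_two hd2.le hsin₀ hsin
  have huniq : ∀ δ ∈ Set.Icc 0 (arcsin (d / 2)), dRL d σ δ = 2 → δ = δ₀ :=
    fun δ hδ ↦ eq_of_dRL_eq_two hd (hsub hδ₀) h₀ (hsub hδ)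
  refine ⟨δ₀, hδ₀, h₀, huniq, ?_, ?_, fun δ hδ ↦ ⟨?_, ?_⟩⟩
  · rintro rfl
    exact (huniq _ ⟨hα, le_rfl⟩ (dRL_zero_arcsin hd)).symm
  · rintro rfl
    exact (huniq _ ⟨le_rfl, hα⟩ (dRL_arcsin_zero (by linarith))).symm
  · exact (two_lt_dRL_iff_lt hd (hsub hδ₀) h₀ (hsub hδ)).mpr
  · exact (dRL_lt_two_iff_lt hd (hsub hδ₀) h₀ (hsub hδ)).mpr
end

section
/- Let 0 < d < 2 and set α* = arcsin(d/2). Define L(d,σ,δ) = 2π − 4·arcsin(d_L(d,σ,δ)/4) + 2δ, R(d,σ,δ) = 4π − 4·arcsin(d_R(d,σ,δ)/4) − 2δ and C(d,σ,δ) = min(L(d,σ,δ), R(d,σ,δ)). Then for every point (σ,δ) in the open rectangle (0,π) × (α*, π−α*) with (σ,δ) ≠ (π/2, π/2), the function (σ,δ) ↦ C(d,σ,δ) does not have a local extremum at (σ,δ). -/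
open Real

/-- Distance between the centers of the two left disks, in `(σ, δ)` coordinates. -/
noncomputable def dL (d σ δ : ℝ) : ℝ :=
  Real.sqrt (d ^ 2 - 4 * d * Real.sin δ * Real.cos σ + 4 * Real.sin δ ^ 2)

/-- Distance between the centers of the two right disks, in `(σ, δ)` coordinates. -/
noncomputable def dR (d σ δ : ℝ) : ℝ :=
  Real.sqrt (d ^ 2 + 4 * d * Real.sin δ * Real.cos σ + 4 * Real.sin δ ^ 2)

/-- Length of the LRL-type bounded-curvature path. -/
noncomputable def Lfun (d σ δ : ℝ) : ℝ :=
  2 * π - 4 * Real.arcsin (dL d σ δ / 4) + 2 * δ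

/-- Length of the RLR-type bounded-curvature path. -/
noncomputable def Rfun (d σ δ : ℝ) : ℝ :=
  4 * π - 4 * Real.arcsin (dR d σ δ / 4) - 2 * δ

/-- Minimum of the LRL- and RLR-path lengths. -/
noncomputable def Cfun (d σ δ : ℝ) : ℝ :=
  min (Lfun d σ δ) (Rfun d σ δ)

/-- The supremum of `Cfun` over the rectangle `Ξ(d) = [0, π] × [α*, π - α*]`,
where `α* = arcsin (d/2)`. -/
noncomputable def Afun (d : ℝ) : ℝ :=
  sSup ((fun p : ℝ × ℝ => Cfun d p.1 p.2) ''
    (Set.Icc 0 π ×ˢ Set.Icc (Real.arcsin (d / 2)) (π - Real.arcsin (d / 2))))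

/-!
The half-length of an LRL path is `π - θ + δ`, where `θ` is the apex angle of the isosceles
triangle with legs `2` and base `dL`; the reflection `(σ, δ) ↦ (π - σ, π - δ)` turns it into that
of an RLR path. Both lengths have nonvanishing `σ`-derivative, so neither is extremal alone, and
`C` can only be extremal, in fact maximal, where they coincide and have no common direction of
increase.

Write `θ_L`, `θ_R` for the two apex angles. Where the lengths coincide, `2δ = π + θ_L - θ_R`, and
the determinant of the two derivatives is a nonzero multiple of
`sin θ_R - sin θ_L + sin 2δ = 4 sin ((θ_R - θ_L) / 2) cos (θ_R / 2) cos (θ_L / 2)`.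
It vanishes only if `θ_L = θ_R`, which forces `cos σ = 0` and `δ = π / 2`. Anywhere else the two
derivatives are independent and both lengths increase in a common direction.
-/

section LocalExtremaOfMin

open Filter Topology

lemma isLocalMin_left_of_isLocalMin_min {X β : Type*} [TopologicalSpace X] [LinearOrder β]
    {f g : X → β} {x : X} (h : IsLocalMin (fun y => min (f y) (g y)) x) (hfg : f x ≤ g x) :
    IsLocalMin f x := by
  filter_upwards [h] with y hy
  exact (min_eq_left hfg).symm.trans_le (hy.trans (min_le_left _ _))

lemma isLocalMax_left_of_isLocalMax_min {X β : Type*} [TopologicalSpace X] [LinearOrder β]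
    [TopologicalSpace β] [OrderClosedTopology β] {f g : X → β} {x : X}
    (h : IsLocalMax (fun y => min (f y) (g y)) x) (hf : ContinuousAt f x) (hg : ContinuousAt g x)
    (hfg : f x < g x) : IsLocalMax f x := by
  have min_eq_f : (fun y => min (f y) (g y)) =ᶠ[𝓝 x] f :=
    (hf.eventually_lt hg hfg).mono fun y hy => min_eq_left hy.le
  exact min_eq_f.isLocalMax_iff.1 h

variable {E : Type*} [NormedAddCommGroup E] [NormedSpace ℝ E] {f g : E → ℝ} {f' g' : E →L[ℝ] ℝ}
  {x v : E}

lemma mem_posTangentConeAt_setOf_lt (hf : HasFDerivAt f f' x) (hv : 0 < f' v) :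
    v ∈ posTangentConeAt {y | f x < f y} x := by
  refine mem_posTangentConeAt_of_frequently_mem (Eventually.frequently ?_)
  by_contra h
  have hv_le : v ∈ posTangentConeAt {y | f y ≤ f x} x :=
    mem_posTangentConeAt_of_frequently_mem
      ((not_eventually.1 h).mono fun _ => le_of_not_gt (α := ℝ))
  have hmax : IsLocalMaxOn f {y | f y ≤ f x} x := eventually_mem_nhdsWithin
  exact hv.not_ge (hmax.hasFDerivWithinAt_nonpos hf.hasFDerivWithinAt hv_le)

lemma not_isLocalMax_min_of_common_ascent (hf : HasFDerivAt f f' x) (hg : HasFDerivAt g g' x)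
    (hfg : f x = g x) (hfv : 0 < f' v) (hgv : 0 < g' v) :
    ¬ IsLocalMax (fun y => min (f y) (g y)) x := by
  intro h
  have hg_max : IsLocalMaxOn g {y | f x < f y} x := by
    filter_upwards [h.filter_mono nhdsWithin_le_nhds, self_mem_nhdsWithin] with y hy hfy
    rw [← hfg, min_self] at hy
    exact hfg ▸ (min_le_iff.1 hy).resolve_left hfy.not_ge
  exact hgv.not_ge (hg_max.hasFDerivWithinAt_nonpos hg.hasFDerivWithinAt
    (mem_posTangentConeAt_setOf_lt hf hfv))

lemma not_isLocalMin_min (hf : HasFDerivAt f f' x) (hg : HasFDerivAt g g' x) (hf' : f' ≠ 0)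
    (hg' : g' ≠ 0) : ¬ IsLocalMin (fun y => min (f y) (g y)) x := by
  intro h
  rcases le_total (f x) (g x) with hfg | hgf
  · exact hf' ((isLocalMin_left_of_isLocalMin_min h hfg).hasFDerivAt_eq_zero hf)
  · simp only [min_comm (f _)] at h
    exact hg' ((isLocalMin_left_of_isLocalMin_min h hgf).hasFDerivAt_eq_zero hg)

lemma not_isLocalMax_min (hf : HasFDerivAt f f' x) (hg : HasFDerivAt g g' x) (hf' : f' ≠ 0)
    (hg' : g' ≠ 0) (hfg : f x = g x → ∃ v, 0 < f' v ∧ 0 < g' v) :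
    ¬ IsLocalMax (fun y => min (f y) (g y)) x := by
  intro h
  rcases lt_trichotomy (f x) (g x) with hlt | heq | hgt
  · exact hf' ((isLocalMax_left_of_isLocalMax_min h hf.continuousAt hg.continuousAt
      hlt).hasFDerivAt_eq_zero hf)
  · obtain ⟨v, hfv, hgv⟩ := hfg heq
    exact not_isLocalMax_min_of_common_ascent hf hg heq hfv hgv h
  · simp only [min_comm (f _)] at h
    exact hg' ((isLocalMax_left_of_isLocalMax_min h hg.continuousAt hf.continuousAt
      hgt).hasFDerivAt_eq_zero hg)

end LocalExtremaOfMin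

lemma exists_pos_pos_of_det_ne_zero {R : Type*} [CommRing R] [LinearOrder R] [IsStrictOrderedRing R]
    {a b a' b' : R} (h : a * b' - b * a' ≠ 0) :
    ∃ v : R × R, 0 < a * v.1 + b * v.2 ∧ 0 < a' * v.1 + b' * v.2 := by
  -- Cramer's rule: `v` solves the system whose right-hand sides are both `det ^ 2`.
  set det := a * b' - b * a' with det_def
  refine ⟨(det * (b' - b), det * (a - a')), ?_, ?_⟩
  · calc 0 < det ^ 2 := by positivity
      _ = a * (det * (b' - b)) + b * (det * (a - a')) := by rw [det_def]; ring
  · calc 0 < det ^ 2 := by positivity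
      _ = a' * (det * (b' - b)) + b' * (det * (a - a')) := by rw [det_def]; ring

lemma two_mul_arcsin_eq_arccos {y : ℝ} (hy : 0 ≤ y) : 2 * arcsin y = arccos (1 - 2 * y ^ 2) := by
  rcases le_total y 1 with hy1 | hy1
  · refine (arccos_eq_of_eq_cos ?_ ?_ ?_).symm
    · linarith [arcsin_nonneg.2 hy]
    · linarith [arcsin_le_pi_div_two y]
    · rw [cos_two_mul', cos_sq', sin_arcsin (by linarith) hy1]
      ring
  · rw [arcsin_of_one_le hy1, arccos_of_le_neg_one (by nlinarith)]
    ring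

lemma sin_sub_sin_add_sin_sub (x y : ℝ) :
    sin x - sin y + sin (x - y) = 4 * sin ((x - y) / 2) * cos (x / 2) * cos (y / 2) := by
  have half_sum : cos ((x + y) / 2) + cos ((x - y) / 2) = 2 * cos (x / 2) * cos (y / 2) := by
    rw [add_div, sub_div, cos_add, cos_sub]
    ring
  have double : sin (x - y) = 2 * sin ((x - y) / 2) * cos ((x - y) / 2) := by
    rw [← sin_two_mul, mul_div_cancel₀ _ two_ne_zero]
  rw [sin_sub_sin, double]
  linear_combination 2 * sin ((x - y) / 2) * half_sum

lemma sin_sub_sin_add_sin_sub_ne_zero {x y : ℝ} (hx : x ∈ Set.Ioo 0 π) (hy : y ∈ Set.Ioo 0 π)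
    (hxy : x ≠ y) : sin x - sin y + sin (x - y) ≠ 0 := by
  have half_cos_ne : ∀ z ∈ Set.Ioo 0 π, cos (z / 2) ≠ 0 := fun z hz =>
    (cos_pos_of_mem_Ioo ⟨by linarith [hz.1, pi_pos], by linarith [hz.2]⟩).ne'
  have half_sin_ne : sin ((x - y) / 2) ≠ 0 := fun h =>
    hxy <| by
      linarith [(sin_eq_zero_iff_of_lt_of_lt (by linarith [hx.1, hy.2, pi_pos])
        (by linarith [hx.2, hy.1, pi_pos])).1 h]
  rw [sin_sub_sin_add_sin_sub]
  exact mul_ne_zero (mul_ne_zero (mul_ne_zero four_ne_zero half_sin_ne) (half_cos_ne x hx))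
    (half_cos_ne y hy)

section CenterDistance

variable {d σ δ : ℝ}

lemma dL_sq (d σ δ : ℝ) :
    dL d σ δ ^ 2 = d ^ 2 - 4 * d * sin δ * cos σ + 4 * sin δ ^ 2 :=
  sq_sqrt (by nlinarith [sq_nonneg (d - 2 * sin δ * cos σ), sq_nonneg (sin δ * sin σ),
    sin_sq_add_cos_sq σ])

lemma dL_pos (hσ : sin σ ≠ 0) (hδ : sin δ ≠ 0) : 0 < dL d σ δ := by
  refine sqrt_pos.2 ?_
  calc 0 < (d - 2 * sin δ * cos σ) ^ 2 + 4 * (sin δ * sin σ) ^ 2 := by positivity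
    _ = d ^ 2 - 4 * d * sin δ * cos σ + 4 * sin δ ^ 2 := by
      linear_combination 4 * sin δ ^ 2 * sin_sq_add_cos_sq σ

lemma dL_pi_sub_pi_sub (d σ δ : ℝ) : dL d (π - σ) (π - δ) = dR d σ δ := by
  simp only [dL, dR, sin_pi_sub, cos_pi_sub, mul_neg, sub_neg_eq_add]

lemma dL_lt_four (hd : |d| ≤ 2) (hσ : sin σ ≠ 0) : dL d σ δ < 4 := by
  have cos_lt : |cos σ| < 1 := by
    rw [← sq_lt_one_iff_abs_lt_one, cos_sq']
    linarith [sq_pos_of_ne_zero hσ]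
  have cross_lt : |d * sin δ * cos σ| < 2 := by
    rw [abs_mul, abs_mul]
    calc |d| * |sin δ| * |cos σ| ≤ 2 * 1 * |cos σ| := by gcongr; exact abs_sin_le_one δ
      _ < 2 := by linarith
  have d_sq_le : d ^ 2 ≤ 2 ^ 2 := sq_le_sq.2 (hd.trans_eq abs_two.symm)
  rw [dL, sqrt_lt' four_pos]
  linarith [sin_sq_le_one δ, (abs_lt.1 cross_lt).1]

lemma dR_pos (hσ : sin σ ≠ 0) (hδ : sin δ ≠ 0) : 0 < dR d σ δ := by
  rw [← dL_pi_sub_pi_sub]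
  exact dL_pos (by rwa [sin_pi_sub]) (by rwa [sin_pi_sub])

lemma dR_lt_four (hd : |d| ≤ 2) (hσ : sin σ ≠ 0) : dR d σ δ < 4 := by
  rw [← dL_pi_sub_pi_sub]
  exact dL_lt_four hd (by rwa [sin_pi_sub])

lemma hasFDerivAt_dL_sq (d σ δ : ℝ) :
    HasFDerivAt (fun p : ℝ × ℝ => dL d p.1 p.2 ^ 2)
      ((4 * d * sin δ * sin σ) • ContinuousLinearMap.fst ℝ ℝ ℝ +
        (8 * sin δ * cos δ - 4 * d * cos δ * cos σ) • ContinuousLinearMap.snd ℝ ℝ ℝ) (σ, δ) := by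
  have hcos := (hasFDerivAt_fst (𝕜 := ℝ) (p := (σ, δ))).cos
  have hsin := (hasFDerivAt_snd (𝕜 := ℝ) (p := (σ, δ))).sin
  simp only [dL_sq]
  refine ((((hsin.const_mul (4 * d)).mul hcos).const_sub (d ^ 2)).add
    ((hsin.pow 2).const_mul 4)).congr_fderiv ?_
  ext <;> simp
  ring

end CenterDistance

/-- The angle at the center of the middle disk of an LRL path, in the triangle of the three disk
centers: its legs are `2` and its base is `dL`, so it is given by the law of cosines. The analogous
angle for RLR paths is `apexAngle d (π - σ) (π - δ)`. -/
noncomputable def apexAngle (d σ δ : ℝ) : ℝ :=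
  arccos (1 - dL d σ δ ^ 2 / 8)

/-- The derivative of `(σ, δ) ↦ Lfun d σ δ`, meaningful for `0 < dL d σ δ < 4`. -/
noncomputable def LfunDeriv (d σ δ : ℝ) : ℝ × ℝ →L[ℝ] ℝ :=
  (-(d * sin δ * sin σ) / sin (apexAngle d σ δ)) • ContinuousLinearMap.fst ℝ ℝ ℝ +
    (2 - (2 * sin δ * cos δ - d * cos δ * cos σ) / sin (apexAngle d σ δ)) •
      ContinuousLinearMap.snd ℝ ℝ ℝ

section PathLengths

variable {d σ δ : ℝ}

lemma Lfun_eq_apexAngle (d σ δ : ℝ) : Lfun d σ δ = 2 * π - 2 * apexAngle d σ δ + 2 * δ := by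
  have dL_nonneg : 0 ≤ dL d σ δ / 4 := div_nonneg (sqrt_nonneg _) zero_le_four
  have arcsin_eq : 2 * arcsin (dL d σ δ / 4) = apexAngle d σ δ := by
    rw [two_mul_arcsin_eq_arccos dL_nonneg, apexAngle]
    ring_nf
  rw [Lfun]
  linear_combination -2 * arcsin_eq

lemma Lfun_pi_sub_pi_sub (d σ δ : ℝ) : Lfun d (π - σ) (π - δ) = Rfun d σ δ := by
  rw [Lfun, Rfun, dL_pi_sub_pi_sub]
  ring

lemma one_sub_dL_sq_div_mem_Ioo (hL : dL d σ δ ∈ Set.Ioo 0 4) :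
    1 - dL d σ δ ^ 2 / 8 ∈ Set.Ioo (-1) 1 := by
  obtain ⟨hpos, hlt⟩ := hL
  constructor <;> nlinarith

lemma apexAngle_mem_Ioo (hL : dL d σ δ ∈ Set.Ioo 0 4) : apexAngle d σ δ ∈ Set.Ioo 0 π :=
  have hcos := one_sub_dL_sq_div_mem_Ioo hL
  ⟨arccos_pos.2 hcos.2, arccos_lt_pi.2 hcos.1⟩

lemma hasFDerivAt_apexAngle (hL : dL d σ δ ∈ Set.Ioo 0 4) :
    HasFDerivAt (fun p : ℝ × ℝ => apexAngle d p.1 p.2)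
      ((8 * sin (apexAngle d σ δ))⁻¹ •
        ((4 * d * sin δ * sin σ) • ContinuousLinearMap.fst ℝ ℝ ℝ +
          (8 * sin δ * cos δ - 4 * d * cos δ * cos σ) • ContinuousLinearMap.snd ℝ ℝ ℝ)) (σ, δ) := by
  have hcos := one_sub_dL_sq_div_mem_Ioo hL
  have harccos := hasDerivAt_arccos hcos.1.ne' hcos.2.ne
  rw [← sin_arccos] at harccos
  have hbase := ((hasFDerivAt_dL_sq d σ δ).mul_const (8⁻¹ : ℝ)).const_sub 1
  simp only [← div_eq_mul_inv] at hbase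
  refine (harccos.comp_hasFDerivAt (σ, δ) hbase).congr_fderiv ?_
  rw [smul_neg, neg_smul, neg_neg, smul_smul, apexAngle, mul_inv, one_div, mul_comm]

lemma hasFDerivAt_Lfun (hL : dL d σ δ ∈ Set.Ioo 0 4) :
    HasFDerivAt (fun p : ℝ × ℝ => Lfun d p.1 p.2) (LfunDeriv d σ δ) (σ, δ) := by
  simp only [Lfun_eq_apexAngle]
  refine ((((hasFDerivAt_apexAngle hL).const_mul 2).const_sub (2 * π)).add
    ((hasFDerivAt_snd (𝕜 := ℝ) (p := (σ, δ))).const_mul 2)).congr_fderiv ?_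
  ext <;> simp [LfunDeriv] <;> ring

lemma hasFDerivAt_Rfun (hR : dR d σ δ ∈ Set.Ioo 0 4) :
    HasFDerivAt (fun p : ℝ × ℝ => Rfun d p.1 p.2) (-LfunDeriv d (π - σ) (π - δ)) (σ, δ) := by
  rw [← dL_pi_sub_pi_sub] at hR
  have hreflect : HasFDerivAt (fun p : ℝ × ℝ => (π, π) - p) (-.id ℝ (ℝ × ℝ)) (σ, δ) :=
    (hasFDerivAt_id _).const_sub _
  simp only [← Lfun_pi_sub_pi_sub]
  refine ((hasFDerivAt_Lfun hR).comp (σ, δ) hreflect).congr_fderiv ?_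
  ext <;> simp

lemma LfunDeriv_ne_zero (hd : d ≠ 0) (hσ : sin σ ≠ 0) (hδ : sin δ ≠ 0)
    (hL : dL d σ δ ∈ Set.Ioo 0 4) : LfunDeriv d σ δ ≠ 0 := by
  intro h
  have hsin := sin_pos_of_mem_Ioo (apexAngle_mem_Ioo hL)
  have h_fst : LfunDeriv d σ δ (1, 0) = 0 := by rw [h, zero_apply]
  simp [LfunDeriv, hd, hσ, hδ, hsin.ne'] at h_fst

lemma cos_eq_zero_of_apexAngle_eq (hd : d ≠ 0) (hδ : sin δ ≠ 0)
    (hL : dL d σ δ ∈ Set.Ioo 0 4) (hR : dR d σ δ ∈ Set.Ioo 0 4)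
    (h : apexAngle d (π - σ) (π - δ) = apexAngle d σ δ) : cos σ = 0 := by
  rw [← dL_pi_sub_pi_sub] at hR
  have hbase := arccos_injOn (Set.Ioo_subset_Icc_self (one_sub_dL_sq_div_mem_Ioo hR))
    (Set.Ioo_subset_Icc_self (one_sub_dL_sq_div_mem_Ioo hL)) h
  rw [dL_sq, dL_sq, sin_pi_sub, cos_pi_sub] at hbase
  have hprod : d * sin δ * cos σ = 0 := by linarith
  exact (mul_eq_zero.1 hprod).resolve_left (mul_ne_zero hd hδ)

lemma sin_apexAngle_sub_sin_apexAngle_add_ne_zero (hd : d ≠ 0) (hδ : sin δ ≠ 0)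
    (hL : dL d σ δ ∈ Set.Ioo 0 4) (hR : dR d σ δ ∈ Set.Ioo 0 4)
    (hne : ¬(cos σ = 0 ∧ δ = π / 2)) (hLR : Lfun d σ δ = Rfun d σ δ) :
    sin (apexAngle d (π - σ) (π - δ)) - sin (apexAngle d σ δ) + 2 * sin δ * cos δ ≠ 0 := by
  rw [← Lfun_pi_sub_pi_sub, Lfun_eq_apexAngle, Lfun_eq_apexAngle] at hLR
  have hθ : apexAngle d (π - σ) (π - δ) ≠ apexAngle d σ δ := fun h =>
    hne ⟨cos_eq_zero_of_apexAngle_eq hd hδ hL hR h, by linarith⟩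
  have hsub : apexAngle d (π - σ) (π - δ) - apexAngle d σ δ = π - 2 * δ := by linarith
  rw [← dL_pi_sub_pi_sub] at hR
  have hkey := sin_sub_sin_add_sin_sub_ne_zero (apexAngle_mem_Ioo hR) (apexAngle_mem_Ioo hL) hθ
  rwa [hsub, sin_pi_sub, sin_two_mul] at hkey

lemma exists_common_ascent_direction (hd : d ≠ 0) (hσ : sin σ ≠ 0) (hδ : sin δ ≠ 0)
    (hL : dL d σ δ ∈ Set.Ioo 0 4) (hR : dR d σ δ ∈ Set.Ioo 0 4)
    (hne : ¬(cos σ = 0 ∧ δ = π / 2)) (hLR : Lfun d σ δ = Rfun d σ δ) :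
    ∃ v, 0 < LfunDeriv d σ δ v ∧ 0 < (-LfunDeriv d (π - σ) (π - δ)) v := by
  have hkey := sin_apexAngle_sub_sin_apexAngle_add_ne_zero hd hδ hL hR hne hLR
  rw [← dL_pi_sub_pi_sub] at hR
  have hsinL := (sin_pos_of_mem_Ioo (apexAngle_mem_Ioo hL)).ne'
  have hsinR := (sin_pos_of_mem_Ioo (apexAngle_mem_Ioo hR)).ne'
  simp only [LfunDeriv, sin_pi_sub, cos_pi_sub]
  set sL := sin (apexAngle d σ δ)
  set sR := sin (apexAngle d (π - σ) (π - δ))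
  have hdet : (-(d * sin δ * sin σ) / sL) *
        -(2 - (2 * sin δ * -cos δ - d * -cos δ * -cos σ) / sR) -
      (2 - (2 * sin δ * cos δ - d * cos δ * cos σ) / sL) * -(-(d * sin δ * sin σ) / sR) =
      2 * d * sin δ * sin σ / (sL * sR) * (sR - sL + 2 * sin δ * cos δ) := by
    field_simp
    ring
  obtain ⟨v, hLv, hRv⟩ := exists_pos_pos_of_det_ne_zero (hdet.trans_ne (by positivity))
  exact ⟨v, hLv.trans_eq (by simp), hRv.trans_eq (by simp; ring)⟩

end PathLengths

theorem C_no_local_extremum_general {d σ δ : ℝ} (hd : d ≠ 0) (hσ : sin σ ≠ 0) (hδ : sin δ ≠ 0)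
    (hL : dL d σ δ < 4) (hR : dR d σ δ < 4) (hne : ¬(cos σ = 0 ∧ δ = π / 2)) :
    ¬ IsLocalMax (fun p : ℝ × ℝ => Cfun d p.1 p.2) (σ, δ) ∧
    ¬ IsLocalMin (fun p : ℝ × ℝ => Cfun d p.1 p.2) (σ, δ) := by
  have hdL : dL d σ δ ∈ Set.Ioo 0 4 := ⟨dL_pos hσ hδ, hL⟩
  have hdR : dR d σ δ ∈ Set.Ioo 0 4 := ⟨dR_pos hσ hδ, hR⟩
  have hLfun := hasFDerivAt_Lfun hdL
  have hRfun := hasFDerivAt_Rfun hdR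
  have hL_ne := LfunDeriv_ne_zero hd hσ hδ hdL
  have hR_ne : -LfunDeriv d (π - σ) (π - δ) ≠ 0 :=
    neg_ne_zero.2 (LfunDeriv_ne_zero hd (by rwa [sin_pi_sub]) (by rwa [sin_pi_sub])
      (by rwa [dL_pi_sub_pi_sub]))
  exact ⟨not_isLocalMax_min hLfun hRfun hL_ne hR_ne
      (exists_common_ascent_direction hd hσ hδ hdL hdR hne),
    not_isLocalMin_min hLfun hRfun hL_ne hR_ne⟩

/-- Let `0 < d < 2` and `α* = arcsin (d/2)`.  At every point
`(σ, δ)` of the open rectangle `(0, π) × (α*, π - α*)` other than `(π/2, π/2)`,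
the function `(σ, δ) ↦ C(d, σ, δ)` has no local extremum (neither a local
maximum nor a local minimum). -/
theorem C_no_local_extremum (d : ℝ) (hd0 : 0 < d) (hd2 : d < 2)
    (σ δ : ℝ) (hσ : σ ∈ Set.Ioo (0:ℝ) π)
    (hδ : δ ∈ Set.Ioo (Real.arcsin (d / 2)) (π - Real.arcsin (d / 2)))
    (hne : (σ, δ) ≠ (π / 2, π / 2)) :
    ¬ IsLocalMax (fun p : ℝ × ℝ => Cfun d p.1 p.2) (σ, δ) ∧
    ¬ IsLocalMin (fun p : ℝ × ℝ => Cfun d p.1 p.2) (σ, δ) := by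
  have hsσ := (sin_pos_of_mem_Ioo hσ).ne'
  have hα : 0 ≤ arcsin (d / 2) := arcsin_nonneg.2 (by positivity)
  have hsδ := (sin_pos_of_mem_Ioo (x := δ) ⟨by linarith [hδ.1], by linarith [hδ.2]⟩).ne'
  have hd : |d| ≤ 2 := by rw [abs_of_pos hd0]; exact hd2.le
  refine C_no_local_extremum_general hd0.ne' hsσ hsδ (dL_lt_four hd hsσ) (dR_lt_four hd hsσ) ?_
  rintro ⟨hcos, rfl⟩
  exact hne (by rw [← arccos_cos hσ.1.le hσ.2.le, hcos, arccos_zero])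
end

section
/- For 0 < d ≤ √2, with α* = arcsin(d/2), Ξ(d) = [0,π] × [α*, π−α*], C(d,σ,δ) = min(L(d,σ,δ), R(d,σ,δ)), and A(d) = sup{ C(d,σ,δ) : (σ,δ) ∈ Ξ(d) }, one has C(d, π/2, π/2) < A(d); in particular C(d, π/2, π/2) = 3π − 4·arcsin(√(d² + 4)/4) < 7π/3 ≤ A(d). -/
open Real

/-!
At `σ = 0` the center distances are linear in `d`: `dL = 2 sin δ - d` and `dR = 2 sin δ + d`.
For `d ≤ 1`, write `d = 2√3 sin ε` and take `δ = π/2 - 2ε`. Then `L ≥ 7π/3` and `R ≥ 7π/3` say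
`(2 cos 2ε ∓ d)/4 ≤ sin (π/6 ∓ ε) = (2 cos ε ∓ d)/4`, so both reduce to `cos 2ε ≤ cos ε`.
For `d ≥ 1`, take the corner `δ = α*` of the rectangle, where `L = 2π + 2α*` and `R = 4π - 6α*`;
both are at least `7π/3` as long as `π/6 ≤ α* ≤ 5π/18`.
At the center, `C < 7π/3` because `√(d² + 4)/4 > 1/2 = sin (π/6)`.
-/

open Set

theorem Lfun_le (d σ δ : ℝ) : Lfun d σ δ ≤ 2 * π + 2 * δ := by
  have harcsin : 0 ≤ arcsin (dL d σ δ / 4) :=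
    arcsin_nonneg.2 (div_nonneg (sqrt_nonneg _) zero_le_four)
  rw [Lfun]
  linarith

theorem bddAbove_image_Cfun_prod (d : ℝ) (s : Set ℝ) {t : Set ℝ} (ht : BddAbove t) :
    BddAbove ((fun p : ℝ × ℝ => Cfun d p.1 p.2) '' (s ×ˢ t)) := by
  obtain ⟨b, hb⟩ := ht
  refine ⟨2 * π + 2 * b, ?_⟩
  rintro _ ⟨⟨σ, δ⟩, ⟨-, hδ⟩, rfl⟩
  calc
    Cfun d σ δ ≤ Lfun d σ δ := min_le_left _ _
    _ ≤ 2 * π + 2 * δ := Lfun_le d σ δ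
    _ ≤ 2 * π + 2 * b := by linarith [hb hδ]

theorem Cfun_le_Afun {d σ δ : ℝ} (hσ : σ ∈ Icc 0 π)
    (hδ : δ ∈ Icc (arcsin (d / 2)) (π - arcsin (d / 2))) : Cfun d σ δ ≤ Afun d :=
  le_csSup (bddAbove_image_Cfun_prod d _ bddAbove_Icc) ⟨(σ, δ), ⟨hσ, hδ⟩, rfl⟩

theorem dL_zero (d δ : ℝ) : dL d 0 δ = |2 * sin δ - d| := by
  rw [dL, cos_zero, ← sqrt_sq_eq_abs]
  ring_nf

theorem dR_zero (d δ : ℝ) : dR d 0 δ = |2 * sin δ + d| := by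
  rw [dR, cos_zero, ← sqrt_sq_eq_abs]
  ring_nf

theorem Cfun_zero_arcsin {d : ℝ} (hd0 : 0 ≤ d) (hd2 : d ≤ 2) :
    Cfun d 0 (arcsin (d / 2)) = min (2 * π + 2 * arcsin (d / 2)) (4 * π - 6 * arcsin (d / 2)) := by
  have hsin : 2 * sin (arcsin (d / 2)) = d := by
    rw [sin_arcsin (by linarith) (by linarith)]
    ring
  have hdL : dL d 0 (arcsin (d / 2)) / 4 = 0 := by simp [dL_zero, hsin]
  have hdR : dR d 0 (arcsin (d / 2)) / 4 = d / 2 := by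
    rw [dR_zero, hsin, abs_of_nonneg (by linarith)]
    ring
  rw [Cfun, Lfun, Rfun, hdL, hdR, arcsin_zero]
  ring_nf

theorem seven_pi_div_three_le_Cfun_zero {ε : ℝ} (hε0 : 0 ≤ ε) (hε : ε < π / 3)
    (hsin : √3 * sin ε ≤ cos (2 * ε)) :
    7 * π / 3 ≤ Cfun (2 * √3 * sin ε) 0 (π / 2 - 2 * ε) := by
  have hsin0 : 0 ≤ √3 * sin ε :=
    mul_nonneg (sqrt_nonneg 3) (sin_nonneg_of_nonneg_of_le_pi hε0 (by linarith))
  have hcos : cos (2 * ε) ≤ cos ε :=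
    cos_le_cos_of_nonneg_of_le_pi hε0 (by linarith) (by linarith)
  have hdL : arcsin (dL (2 * √3 * sin ε) 0 (π / 2 - 2 * ε) / 4) ≤ π / 6 - ε := by
    rw [dL_zero, sin_pi_div_two_sub, abs_of_nonneg (by linarith),
      arcsin_le_iff_le_sin' ⟨by linarith, by linarith⟩, sin_sub, sin_pi_div_six, cos_pi_div_six]
    linarith
  have hdR : arcsin (dR (2 * √3 * sin ε) 0 (π / 2 - 2 * ε) / 4) ≤ π / 6 + ε := by
    rw [dR_zero, sin_pi_div_two_sub, abs_of_nonneg (by linarith),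
      arcsin_le_iff_le_sin' ⟨by linarith, by linarith⟩, sin_add, sin_pi_div_six, cos_pi_div_six]
    linarith
  refine le_min ?_ ?_
  · rw [Lfun]
    linarith
  · rw [Rfun]
    linarith

theorem seven_pi_div_three_le_Afun_of_le_one {d : ℝ} (hd0 : 0 ≤ d) (hd1 : d ≤ 1) :
    7 * π / 3 ≤ Afun d := by
  have hpi := pi_pos
  have hsqrt : 1 ≤ √3 := one_le_sqrt.2 (by norm_num)
  have hle : d / (2 * √3) ≤ 1 / 2 := by
    rw [div_le_iff₀ (by positivity)]
    linarith
  have hnonneg : 0 ≤ d / (2 * √3) := by positivity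
  set ε := arcsin (d / (2 * √3)) with hε
  have hsin : sin ε = d / (2 * √3) := by rw [hε, sin_arcsin (by linarith) (by linarith)]
  have hd : 2 * √3 * sin ε = d := by
    rw [hsin]
    field_simp
  have hε0 : 0 ≤ ε := arcsin_nonneg.2 hnonneg
  have hε6 : ε ≤ π / 6 := by
    rw [hε, arcsin_le_iff_le_sin' ⟨by linarith, by linarith⟩, sin_pi_div_six]
    exact hle
  have hcos : 1 / 2 ≤ cos (2 * ε) := by
    rw [← cos_pi_div_three]
    exact cos_le_cos_of_nonneg_of_le_pi (by linarith) (by linarith) (by linarith)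
  have hδ : arcsin (d / 2) ≤ π / 2 - 2 * ε := by
    rw [arcsin_le_iff_le_sin ⟨by linarith, by linarith⟩ ⟨by linarith, by linarith⟩,
      sin_pi_div_two_sub]
    linarith
  calc
    7 * π / 3 ≤ Cfun (2 * √3 * sin ε) 0 (π / 2 - 2 * ε) :=
      seven_pi_div_three_le_Cfun_zero hε0 (by linarith) (by linarith)
    _ = Cfun d 0 (π / 2 - 2 * ε) := by rw [hd]
    _ ≤ Afun d := Cfun_le_Afun ⟨le_rfl, hpi.le⟩ ⟨hδ, by linarith⟩

theorem seven_pi_div_three_le_Afun_of_one_le {d : ℝ} (hd1 : 1 ≤ d)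
    (hd : d ≤ 2 * sin (5 * π / 18)) : 7 * π / 3 ≤ Afun d := by
  have hpi := pi_pos
  have hd2 : d ≤ 2 := hd.trans (by linarith [sin_le_one (5 * π / 18)])
  have hlower : π / 6 ≤ arcsin (d / 2) := by
    rw [le_arcsin_iff_sin_le ⟨by linarith, by linarith⟩ ⟨by linarith, by linarith⟩,
      sin_pi_div_six]
    linarith
  have hupper : arcsin (d / 2) ≤ 5 * π / 18 := by
    rw [arcsin_le_iff_le_sin' ⟨by linarith, by linarith⟩]
    linarith
  calc
    7 * π / 3 ≤ min (2 * π + 2 * arcsin (d / 2)) (4 * π - 6 * arcsin (d / 2)) :=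
      le_min (by linarith) (by linarith)
    _ = Cfun d 0 (arcsin (d / 2)) := (Cfun_zero_arcsin (by linarith) hd2).symm
    _ ≤ Afun d := Cfun_le_Afun ⟨le_rfl, hpi.le⟩ ⟨le_rfl, by linarith⟩

theorem Cfun_pi_div_two_pi_div_two (d : ℝ) :
    Cfun d (π / 2) (π / 2) = 3 * π - 4 * arcsin (√(d ^ 2 + 4) / 4) := by
  have hdL : dL d (π / 2) (π / 2) = √(d ^ 2 + 4) := by simp [dL]
  have hdR : dR d (π / 2) (π / 2) = √(d ^ 2 + 4) := by simp [dR]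
  rw [Cfun, Lfun, Rfun, hdL, hdR, min_eq_left (by linarith)]
  ring

theorem three_pi_sub_four_arcsin_lt {d : ℝ} (hd : d ≠ 0) :
    3 * π - 4 * arcsin (√(d ^ 2 + 4) / 4) < 7 * π / 3 := by
  have hsqrt : 2 < √(d ^ 2 + 4) := lt_sqrt_of_sq_lt (by linarith [sq_pos_of_ne_zero hd])
  have harcsin : π / 6 < arcsin (√(d ^ 2 + 4) / 4) := by
    rw [lt_arcsin_iff_sin_lt' ⟨by linarith [pi_pos], by linarith [pi_pos]⟩, sin_pi_div_six]
    linarith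
  linarith

theorem sqrt_two_le_two_mul_sin_five_pi_div_eighteen : √2 ≤ 2 * sin (5 * π / 18) := by
  have hsin : sin (π / 4) ≤ sin (5 * π / 18) :=
    sin_le_sin_of_le_of_le_pi_div_two (by linarith [pi_pos]) (by linarith [pi_pos])
      (by linarith [pi_pos])
  rw [sin_pi_div_four] at hsin
  linarith

theorem C_center_less_than_A_general (d : ℝ) (hd0 : 0 < d) (hd : d ≤ 2 * sin (5 * π / 18)) :
    Cfun d (π / 2) (π / 2) < Afun d ∧
    Cfun d (π / 2) (π / 2) = 3 * π - 4 * arcsin (√(d ^ 2 + 4) / 4) ∧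
    3 * π - 4 * arcsin (√(d ^ 2 + 4) / 4) < 7 * π / 3 ∧
    7 * π / 3 ≤ Afun d := by
  have hcenter := Cfun_pi_div_two_pi_div_two d
  have hlt := three_pi_sub_four_arcsin_lt hd0.ne'
  have hA : 7 * π / 3 ≤ Afun d := by
    rcases le_total d 1 with hd1 | hd1
    · exact seven_pi_div_three_le_Afun_of_le_one hd0.le hd1
    · exact seven_pi_div_three_le_Afun_of_one_le hd1 hd
  exact ⟨hcenter ▸ hlt.trans_le hA, hcenter, hlt, hA⟩

/-- For `0 < d ≤ √2`, one has `C(d, π/2, π/2) < A(d)`;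
in particular `C(d, π/2, π/2) = 3π - 4·arcsin (√(d² + 4) / 4) < 7π/3 ≤ A(d)`. -/
theorem C_center_less_than_A (d : ℝ) (hd0 : 0 < d) (hd2 : d ≤ Real.sqrt 2) :
    Cfun d (π / 2) (π / 2) < Afun d ∧
    Cfun d (π / 2) (π / 2) = 3 * π - 4 * Real.arcsin (Real.sqrt (d ^ 2 + 4) / 4) ∧
    3 * π - 4 * Real.arcsin (Real.sqrt (d ^ 2 + 4) / 4) < 7 * π / 3 ∧
    7 * π / 3 ≤ Afun d :=
  C_center_less_than_A_general d hd0 (hd2.trans sqrt_two_le_two_mul_sin_five_pi_div_eighteen)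
end
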